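/- Let b₂⁻ = (3 − √3)/6 and b₂⁺ = (3 + √3)/6. The Hurwitz zeta function σ ↦ ζ(σ, a) with 0 < a ≤ 1 has a real zero in the open interval (-1, 0) if and only if 0 < a < b₂⁻ or 1/2 < a < b₂⁺. -/

import Mathlib

open HurwitzZeta Set

/-!
For `-1 < Re s < 0`, `Γ(s) ζ(s, a)` is the Mellin transform of
`K(t) = e^{-at} / (1 - e^{-t}) - 1 / t - (1 / 2 - a)`. In the power series of `t (eᵗ - 1) K(t)`
the lowest-order coefficient is half of `B₂(a) = a² - a + 1/6`, and when `(1/2 - a) B₂(a) ≤ 0` all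
the later ones are positive if `a > 1/2` and negative if `a ≤ 1/2`. So `K` then has constant sign
and `ζ(σ, a) ≠ 0` on `(-1, 0)`. When `(1/2 - a) B₂(a) > 0`, the values `ζ(0, a) = 1/2 - a` and
`ζ(-1, a) = -B₂(a)/2` have opposite signs, and the intermediate value theorem yields a zero.
-/

section

open Complex MeasureTheory Filter Topology Asymptotics
open scoped Nat

lemma mul_mul_sub_pos_iff {R : Type*} [Ring R] [LinearOrder R] [IsStrictOrderedRing R]
    {p q r x : R} (hpq : p < q) (hqr : q < r) :
    0 < (q - x) * ((x - p) * (x - r)) ↔ x < p ∨ q < x ∧ x < r := by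
  simp only [mul_pos_iff, mul_neg_iff, sub_pos, sub_neg]
  grind

lemma isPreconnected_re_gt_diff_of_countable (b : ℝ) {S : Set ℂ} (hS : S.Countable) :
    IsPreconnected ({s : ℂ | b < s.re} \ S) := by
  -- `expMap` is a homeomorphism of `ℂ` onto the half-plane.
  let expMap : ℂ → ℂ := fun z => (Real.exp z.re + b : ℝ) + z.im * I
  have hre (z : ℂ) : (expMap z).re = Real.exp z.re + b := by simp [expMap, exp_ofReal_re]
  have him (z : ℂ) : (expMap z).im = z.im := by simp [expMap, exp_ofReal_im]
  have hcont : Continuous expMap := by fun_prop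
  have hinj : Function.Injective expMap := fun z w h => by
    have hexp : Real.exp z.re = Real.exp w.re := by
      rw [← add_left_inj b, ← hre, ← hre, h]
    exact Complex.ext (Real.exp_injective hexp) ((him z).symm.trans (h ▸ him w))
  have hrange : range expMap = {s : ℂ | b < s.re} := by
    ext s
    constructor
    · rintro ⟨z, rfl⟩
      rw [mem_ofPred_eq, hre]
      exact lt_add_of_pos_left b (Real.exp_pos _)
    · intro hs
      refine ⟨⟨Real.log (s.re - b), s.im⟩, Complex.ext ?_ (him _)⟩
      rw [hre, Real.exp_log (sub_pos.2 hs), sub_add_cancel]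
  have hcompl : IsConnected (expMap ⁻¹' S)ᶜ :=
    (hS.preimage_of_injOn hinj.injOn).isConnected_compl_of_one_lt_rank (by simp)
  rw [← hrange, ← image_compl_preimage]
  exact hcompl.isPreconnected.image expMap hcont.continuousOn

lemma setIntegral_pos_of_forall_pos {X : Type*} [MeasurableSpace X] {μ : Measure X} {s : Set X}
    {f : X → ℝ} (hs : MeasurableSet s) (hμs : μ s ≠ 0) (hf : IntegrableOn f s μ)
    (hpos : ∀ x ∈ s, 0 < f x) : 0 < ∫ x in s, f x ∂μ := by
  rw [setIntegral_pos_iff_support_of_nonneg_ae _ hf]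
  · have hsupp : s ⊆ Function.support f := fun x hx => (hpos x hx).ne'
    rwa [inter_eq_right.2 hsupp, pos_iff_ne_zero]
  · filter_upwards [ae_restrict_mem hs] with x hx using (hpos x hx).le

lemma locallyIntegrableOn_indicator {X E : Type*} [TopologicalSpace X] [MeasurableSpace X]
    [NormedAddCommGroup E] {μ : Measure X} {f : X → E} {s u : Set X}
    (hf : LocallyIntegrableOn f s μ) (hu : MeasurableSet u) :
    LocallyIntegrableOn (u.indicator f) s μ := fun x hx =>
  let ⟨v, hv, hfv⟩ := hf x hx
  ⟨v, hv, hfv.indicator hu⟩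

lemma hasMellin_one_Ioi {s : ℂ} (hs : s.re < 0) :
    HasMellin (indicator (Ioi 1) (fun _ => 1 : ℝ → ℂ)) s (-1 / s) := by
  have hre : (s - 1).re < -1 := by rw [sub_re, one_re]; linarith
  have hsub : Ioi (1 : ℝ) ⊆ Ioi 0 := Ioi_subset_Ioi zero_le_one
  simp_rw [HasMellin, mellin, MellinConvergent, ← indicator_smul, smul_eq_mul, mul_one,
    IntegrableOn, integrable_indicator_iff measurableSet_Ioi, IntegrableOn,
    integral_indicator measurableSet_Ioi, Measure.restrict_restrict_of_subset hsub]
  exact ⟨integrableOn_Ioi_cpow_of_lt hre one_pos, by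
    simp [integral_Ioi_cpow_of_lt hre one_pos]⟩

lemma hasMellin_cpow_Ioi (a : ℂ) {s : ℂ} (hs : s.re + a.re < 0) :
    HasMellin (indicator (Ioi 1) (fun t => ↑t ^ a : ℝ → ℂ)) s (-1 / (s + a)) := by
  have := hasMellin_one_Ioi (by rwa [add_re] : (s + a).re < 0)
  simp_rw [HasMellin, ← MellinConvergent.cpow_smul, ← mellin_cpow_smul, ← indicator_smul,
    smul_eq_mul, mul_one] at this
  exact this

lemma eqOn_cpow_smul_ofReal {f : ℝ → ℝ} (σ : ℝ) : EqOn
    (fun t : ℝ => (t : ℂ) ^ ((σ : ℂ) - 1) • (f t : ℂ))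
    (fun t : ℝ => ((t ^ (σ - 1) * f t : ℝ) : ℂ)) (Ioi 0) := fun t ht => by
  have hcpow := ofReal_cpow (le_of_lt ht) (σ - 1)
  push_cast at hcpow ⊢
  rw [hcpow, smul_eq_mul]

lemma mellin_ofReal (f : ℝ → ℝ) (σ : ℝ) :
    mellin (fun t => (f t : ℂ)) σ = (∫ t in Ioi 0, t ^ (σ - 1) * f t : ℝ) := by
  rw [mellin, setIntegral_congr_fun measurableSet_Ioi (eqOn_cpow_smul_ofReal σ)]
  exact integral_ofReal

lemma integrableOn_of_mellinConvergent_ofReal {f : ℝ → ℝ} {σ : ℝ}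
    (hf : MellinConvergent (fun t => (f t : ℂ)) σ) :
    IntegrableOn (fun t => t ^ (σ - 1) * f t) (Ioi 0) := by
  simpa using! (hf.congr_fun (eqOn_cpow_smul_ofReal σ) measurableSet_Ioi).re

lemma exp_sub_one_pos {t : ℝ} (ht : 0 < t) : 0 < Real.exp t - 1 :=
  sub_pos.2 (Real.one_lt_exp_iff.2 ht)

lemma hasSum_pow_div_factorial (t : ℝ) : HasSum (fun n : ℕ => t ^ n / n !) (Real.exp t) := by
  rw [Real.exp_eq_exp_ℝ]
  exact NormedSpace.expSeries_div_hasSum_exp t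

lemma real_Gamma_ne_zero_of_mem_Ioo {σ : ℝ} (hσ : σ ∈ Ioo (-1) 0) : Real.Gamma σ ≠ 0 := by
  have hadd : 0 < σ * Real.Gamma σ := by
    rw [← Real.Gamma_add_one hσ.2.ne]
    exact Real.Gamma_pos_of_pos (by linarith [hσ.1])
  exact right_ne_zero_of_mul hadd.ne'

lemma eval_bernoulli_two (z : ℂ) :
    ((Polynomial.bernoulli 2).map (algebraMap ℚ ℂ)).eval z = z ^ 2 - z + 1 / 6 := by
  simp [Polynomial.bernoulli, Finset.sum_range_succ, bernoulli_two]
  ring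

/-- The function `c ↦ cⁿ`, centred to have mean zero on `[0, 1]`, minus the same for `n = 1`.
For `c = 1 - a` and `n ≥ 2` it is the coefficient of `tⁿ / n!` in the power series of
`(eᵗ - 1) * regularizedKernel a t`. -/
noncomputable def regularizedCoeff (c : ℝ) (n : ℕ) : ℝ := c ^ n - 1 / (n + 1) - (c - 1 / 2)

lemma regularizedCoeff_two (c : ℝ) : regularizedCoeff c 2 = c ^ 2 - c + 1 / 6 := by
  norm_num [regularizedCoeff]
  ring

lemma abs_regularizedCoeff_le_one {c : ℝ} (hc : c ∈ Icc 0 1) {n : ℕ} (hn : n ≠ 0) :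
    |regularizedCoeff c n| ≤ 1 := by
  have hpow_nonneg : 0 ≤ c ^ n := pow_nonneg hc.1 n
  have hpow_le : c ^ n ≤ c := pow_le_of_le_one hc.1 hc.2 hn
  have hinv_pos : 0 < 1 / (n + 1 : ℝ) := Nat.one_div_pos_of_nat
  have hinv_le : 1 / (n + 1 : ℝ) ≤ 1 / 2 :=
    one_div_le_one_div_of_le two_pos (by norm_cast; lia)
  rw [regularizedCoeff, abs_le]
  constructor <;> linarith [hc.2]

lemma regularizedCoeff_pos {c : ℝ} (hc : c ∈ Ico 0 (1 / 4)) {n : ℕ} (hn : 3 ≤ n) :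
    0 < regularizedCoeff c n := by
  have hpow : 0 ≤ c ^ n := pow_nonneg hc.1 n
  have hinv : 1 / (n + 1 : ℝ) ≤ 1 / 4 :=
    one_div_le_one_div_of_le four_pos (by norm_cast; lia)
  rw [regularizedCoeff]
  linarith [hc.2]

lemma convexOn_regularizedCoeff (n : ℕ) :
    ConvexOn ℝ (Ici 0) fun c => regularizedCoeff c n := by
  have hid : ConcaveOn ℝ (Ici (0 : ℝ)) fun c => c := concaveOn_id (convex_Ici 0)
  exact ((convexOn_pow n).sub (concaveOn_const _ (convex_Ici 0))).sub
    (hid.sub (convexOn_const _ (convex_Ici 0)))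

lemma regularizedCoeff_one_half_neg {n : ℕ} (hn : 2 ≤ n) : regularizedCoeff (1 / 2) n < 0 := by
  have hlt : n + 1 < 2 ^ n := by
    induction n, hn using Nat.le_induction with
    | base => norm_num
    | succ n _ ih => rw [pow_succ]; lia
  have : (1 / 2 : ℝ) ^ n < 1 / (n + 1) := by
    rw [one_div_pow]
    exact one_div_lt_one_div_of_lt (by positivity) (mod_cast hlt)
  rw [regularizedCoeff]
  linarith

lemma regularizedCoeff_four_fifths_neg {n : ℕ} (hn : 3 ≤ n) :
    regularizedCoeff (4 / 5) n < 0 := by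
  rw [regularizedCoeff]
  rcases lt_or_ge n 6 with hn' | hn'
  · interval_cases n <;> norm_num
  · have hpow : (4 / 5 : ℝ) ^ n ≤ (4 / 5) ^ 6 :=
      pow_le_pow_of_le_one (by norm_num) (by norm_num) hn'
    have hinv : 0 < 1 / (n + 1 : ℝ) := Nat.one_div_pos_of_nat
    norm_num at hpow
    linarith

lemma regularizedCoeff_neg {c : ℝ} (hc : c ∈ Icc (1 / 2) (4 / 5)) {n : ℕ} (hn : 3 ≤ n) :
    regularizedCoeff c n < 0 :=
  -- `4 / 5` lies just above the larger root `(3 + √3) / 6` of `B₂`.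
  ((convexOn_regularizedCoeff n).le_max_of_mem_Icc (by norm_num) (by norm_num) hc).trans_lt <|
    max_lt (regularizedCoeff_one_half_neg (by lia)) (regularizedCoeff_four_fifths_neg hn)

/-- The generating function `∑ₙ e^{-(n + a)t}`, whose Mellin transform is `Γ(s) ζ(s, a)` for
`1 < Re s`. -/
noncomputable def hurwitzKernel (a t : ℝ) : ℝ := Real.exp (-a * t) / (1 - Real.exp (-t))

/-- The terms of orders `t⁻¹` and `t⁰` in the Laurent expansion of `hurwitzKernel a` at `t = 0`. -/
noncomputable def hurwitzPolarPart (a t : ℝ) : ℝ := t⁻¹ + (1 / 2 - a)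

/-- The kernel whose Mellin transform is `Γ(s) ζ(s, a)` in the strip `-1 < Re s < 0`. -/
noncomputable def regularizedKernel (a t : ℝ) : ℝ := hurwitzKernel a t - hurwitzPolarPart a t

lemma hasSum_regularizedCoeff (c t : ℝ) :
    HasSum (fun n => regularizedCoeff c n * (t ^ (n + 1) / n !))
      (t * Real.exp (c * t) - (Real.exp t - 1) - (c - 1 / 2) * (t * Real.exp t)) := by
  have hexp_sub_one : HasSum (fun n : ℕ => t ^ (n + 1) / (n + 1)!) (Real.exp t - 1) := by
    simpa using (hasSum_nat_add_iff' 1).2 (hasSum_pow_div_factorial t)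
  convert! (((hasSum_pow_div_factorial (c * t)).mul_left t).sub hexp_sub_one).sub
    (((hasSum_pow_div_factorial t).mul_left t).mul_left (c - 1 / 2)) using 2 with n
  rw [regularizedCoeff, Nat.factorial_succ]
  push_cast
  field_simp
  ring

lemma hasSum_mul_regularizedKernel (a : ℝ) {t : ℝ} (ht : t ≠ 0) :
    HasSum (fun k => regularizedCoeff (1 - a) (k + 2) * (t ^ (k + 3) / (k + 2)!))
      (t * (Real.exp t - 1) * regularizedKernel a t) := by
  have hexp_ne : Real.exp t - 1 ≠ 0 := sub_ne_zero.2 (mt (Real.exp_eq_one_iff t).1 ht)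
  have hkernel : hurwitzKernel a t = Real.exp ((1 - a) * t) / (Real.exp t - 1) := by
    rw [hurwitzKernel, ← mul_div_mul_left _ _ (Real.exp_ne_zero t), mul_sub, ← Real.exp_add,
      ← Real.exp_add, add_neg_cancel, Real.exp_zero, mul_one]
    ring_nf
  convert! (hasSum_nat_add_iff' 2).2 (hasSum_regularizedCoeff (1 - a) t) using 1
  rw [regularizedKernel, hurwitzPolarPart, hkernel]
  simp only [Finset.sum_range_succ, Finset.sum_range_zero, regularizedCoeff]
  field_simp
  norm_num
  ring

lemma regularizedKernel_pos {a t : ℝ} (ha : a ∈ Ioc (1 / 2) 1) (hB : 0 ≤ a ^ 2 - a + 1 / 6)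
    (ht : 0 < t) : 0 < regularizedKernel a t := by
  have hc : 1 - a ∈ Ico 0 (1 / 4) := ⟨sub_nonneg.2 ha.2, by nlinarith [ha.1]⟩
  have hcoeff_two : 0 ≤ regularizedCoeff (1 - a) 2 := by
    rw [regularizedCoeff_two]; linarith
  have hcoeff_pos (k : ℕ) : 0 < regularizedCoeff (1 - a) (k + 3) :=
    regularizedCoeff_pos hc (by lia)
  refine pos_of_mul_pos_right (a := t * (Real.exp t - 1)) ?_
    (mul_pos ht (exp_sub_one_pos ht)).le
  refine hasSum_lt (i := 1) (fun k => ?_) ?_ hasSum_zero (hasSum_mul_regularizedKernel a ht.ne')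
  · cases k with
    | zero => exact mul_nonneg hcoeff_two (by positivity)
    | succ k => exact mul_nonneg (hcoeff_pos k).le (by positivity)
  · exact mul_pos (hcoeff_pos 0) (by positivity)

lemma regularizedKernel_neg {a t : ℝ} (ha : a ≤ 1 / 2) (hB : a ^ 2 - a + 1 / 6 ≤ 0)
    (ht : 0 < t) : regularizedKernel a t < 0 := by
  have hc : 1 - a ∈ Icc (1 / 2) (4 / 5) := ⟨by linarith, by nlinarith⟩
  have hcoeff_two : regularizedCoeff (1 - a) 2 ≤ 0 := by
    rw [regularizedCoeff_two]; linarith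
  have hcoeff_neg (k : ℕ) : regularizedCoeff (1 - a) (k + 3) < 0 :=
    regularizedCoeff_neg hc (by lia)
  refine neg_of_mul_neg_right (a := t * (Real.exp t - 1)) ?_
    (mul_pos ht (exp_sub_one_pos ht)).le
  refine hasSum_lt (i := 1) (fun k => ?_) ?_ (hasSum_mul_regularizedKernel a ht.ne') hasSum_zero
  · cases k with
    | zero => exact mul_nonpos_of_nonpos_of_nonneg hcoeff_two (by positivity)
    | succ k => exact mul_nonpos_of_nonpos_of_nonneg (hcoeff_neg k).le (by positivity)
  · exact mul_neg_of_neg_of_pos (hcoeff_neg 0) (by positivity)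

lemma abs_regularizedKernel_le {a t : ℝ} (ha : a ∈ Icc 0 1) (ht : 0 < t) :
    |regularizedKernel a t| ≤ t := by
  have hexp_pos := exp_sub_one_pos ht
  have hmajorant : HasSum (fun k : ℕ => t ^ (k + 3) / (k + 2)!) (t * (Real.exp t - 1 - t)) := by
    convert! ((hasSum_nat_add_iff' 2).2 (hasSum_pow_div_factorial t)).mul_left t using 1
    · ext k; ring
    · simp [Finset.sum_range_succ, sub_sub]
  have hbound : |t * (Real.exp t - 1) * regularizedKernel a t| ≤ t * (Real.exp t - 1 - t) := by
    refine (hasSum_mul_regularizedKernel a ht.ne').norm_le_of_bounded hmajorant fun k => ?_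
    have hcoeff := abs_regularizedCoeff_le_one (c := 1 - a)
      ⟨sub_nonneg.2 ha.2, sub_le_self 1 ha.1⟩ (n := k + 2) (by lia)
    rw [norm_mul, Real.norm_eq_abs, Real.norm_of_nonneg (by positivity)]
    exact mul_le_of_le_one_left (by positivity) hcoeff
  have hexp_le : Real.exp t - 1 - t ≤ (Real.exp t - 1) * t := by
    have := mul_le_mul_of_nonneg_left (Real.one_sub_le_exp_neg t) (Real.exp_pos t).le
    rw [← Real.exp_add, add_neg_cancel, Real.exp_zero] at this
    linarith
  rw [abs_mul, abs_of_pos (mul_pos ht hexp_pos), mul_assoc] at hbound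
  exact le_of_mul_le_mul_left ((le_of_mul_le_mul_left hbound ht).trans hexp_le) hexp_pos

lemma continuousOn_hurwitzKernel (a : ℝ) : ContinuousOn (hurwitzKernel a) (Ioi 0) := by
  refine ContinuousOn.div (by fun_prop) (by fun_prop) fun t ht => ?_
  exact (sub_pos.2 (Real.exp_lt_one_iff.2 (neg_lt_zero.2 ht))).ne'

lemma continuousOn_hurwitzPolarPart (a : ℝ) : ContinuousOn (hurwitzPolarPart a) (Ioi 0) :=
  (continuousOn_inv₀.mono fun _ ht => ne_of_gt ht).add continuousOn_const

lemma hurwitzKernel_isBigO_atTop (a : ℝ) :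
    hurwitzKernel a =O[atTop] fun t => Real.exp (-a * t) := by
  have hlim : Tendsto (fun t => (1 - Real.exp (-t))⁻¹) atTop (𝓝 (1 - 0)⁻¹) :=
    (tendsto_const_nhds.sub Real.tendsto_exp_neg_atTop_nhds_zero).inv₀ (by norm_num)
  simpa only [mul_one] using!
    (isBigO_refl (fun t => Real.exp (-a * t)) atTop).mul (hlim.isBigO_one ℝ)

/-- `hurwitzKernel` with its polar part removed on `(0, 1]` only: it is `O(t)` at `0` and still
decays exponentially, so its Mellin transform is holomorphic on the half-plane `-1 < Re s`. -/
noncomputable def truncatedKernel (a t : ℝ) : ℝ :=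
  hurwitzKernel a t - (Ioc 0 1).indicator (hurwitzPolarPart a) t

lemma hurwitzKernel_eq_truncatedKernel_add (a t : ℝ) :
    hurwitzKernel a t = truncatedKernel a t + (Ioc 0 1).indicator (hurwitzPolarPart a) t :=
  (sub_add_cancel _ _).symm

lemma regularizedKernel_eq_truncatedKernel_sub (a : ℝ) {t : ℝ} (ht : 0 < t) :
    regularizedKernel a t = truncatedKernel a t - (Ioi 1).indicator (hurwitzPolarPart a) t := by
  rcases le_or_gt t 1 with h | h
  · simp [regularizedKernel, truncatedKernel, ht, h]
  · simp [regularizedKernel, truncatedKernel, h]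

lemma locallyIntegrableOn_truncatedKernel (a : ℝ) :
    LocallyIntegrableOn (fun t => (truncatedKernel a t : ℂ)) (Ioi 0) := by
  have hreal : LocallyIntegrableOn (truncatedKernel a) (Ioi 0) :=
    ((continuousOn_hurwitzKernel a).locallyIntegrableOn measurableSet_Ioi).sub
      (locallyIntegrableOn_indicator
        ((continuousOn_hurwitzPolarPart a).locallyIntegrableOn measurableSet_Ioi)
        measurableSet_Ioc)
  intro t ht
  obtain ⟨u, hu, hint⟩ := hreal t ht
  exact ⟨u, hu, Integrable.ofReal hint⟩

lemma truncatedKernel_isBigO_atTop (a : ℝ) :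
    (fun t => (truncatedKernel a t : ℂ)) =O[atTop] fun t => Real.exp (-a * t) := by
  refine isBigO_ofReal_left.2 ((hurwitzKernel_isBigO_atTop a).congr' ?_ .rfl)
  filter_upwards [eventually_gt_atTop 1] with t ht
  simp [truncatedKernel, ht]

lemma truncatedKernel_isBigO_nhdsGT_zero {a : ℝ} (ha : a ∈ Icc 0 1) :
    (fun t => (truncatedKernel a t : ℂ)) =O[𝓝[>] 0] fun t : ℝ => t ^ (-(-1) : ℝ) := by
  refine isBigO_ofReal_left.2 (.of_bound 1 ?_)
  filter_upwards [Ioc_mem_nhdsGT zero_lt_one] with t ht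
  have htrunc : truncatedKernel a t = regularizedKernel a t := by
    simp [truncatedKernel, regularizedKernel, ht.1, ht.2]
  rw [htrunc, neg_neg, Real.rpow_one, one_mul, Real.norm_of_nonneg ht.1.le]
  exact abs_regularizedKernel_le ha ht.1

section

variable {a : ℝ} {s : ℂ}

lemma mellinConvergent_truncatedKernel (ha : a ∈ Ioc 0 1) (hs : -1 < s.re) :
    MellinConvergent (fun t => (truncatedKernel a t : ℂ)) s :=
  mellinConvergent_of_isBigO_rpow_exp ha.1 (locallyIntegrableOn_truncatedKernel a)
    (truncatedKernel_isBigO_atTop a)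
    (truncatedKernel_isBigO_nhdsGT_zero (Ioc_subset_Icc_self ha)) hs

lemma differentiableAt_mellin_truncatedKernel (ha : a ∈ Ioc 0 1) (hs : -1 < s.re) :
    DifferentiableAt ℂ (mellin fun t => (truncatedKernel a t : ℂ)) s :=
  mellin_differentiableAt_of_isBigO_rpow_exp ha.1 (locallyIntegrableOn_truncatedKernel a)
    (truncatedKernel_isBigO_atTop a)
    (truncatedKernel_isBigO_nhdsGT_zero (Ioc_subset_Icc_self ha)) hs

lemma ofReal_indicator_hurwitzPolarPart (a : ℝ) (u : Set ℝ) (t : ℝ) :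
    ((u.indicator (hurwitzPolarPart a) t : ℝ) : ℂ) =
      u.indicator (fun t : ℝ => (t : ℂ) ^ (-1 : ℂ)) t +
        (1 / 2 - a : ℂ) • u.indicator (fun _ => (1 : ℂ)) t := by
  by_cases ht : t ∈ u <;> simp [ht, hurwitzPolarPart, cpow_neg_one]

lemma hasMellin_hurwitzPolarPart_Ioc (a : ℝ) (hs : 1 < s.re) :
    HasMellin (fun t => (((Ioc 0 1).indicator (hurwitzPolarPart a) t : ℝ) : ℂ)) s
      (1 / (s - 1) + (1 / 2 - a) / s) := by
  have hinv := hasMellin_cpow_Ioc (-1) (s := s) (by simpa using hs)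
  have hone := hasMellin_one_Ioc (s := s) (by linarith)
  have hconst := hasMellin_const_smul hone.1 (1 / 2 - a : ℂ)
  simp_rw [ofReal_indicator_hurwitzPolarPart]
  convert! hasMellin_add hinv.1 hconst.1 using 1
  rw [hinv.2, hconst.2, hone.2, smul_eq_mul]
  ring

lemma hasMellin_hurwitzPolarPart_Ioi (a : ℝ) (hs : s.re < 0) :
    HasMellin (fun t => (((Ioi 1).indicator (hurwitzPolarPart a) t : ℝ) : ℂ)) s
      (-(1 / (s - 1) + (1 / 2 - a) / s)) := by
  have hinv := hasMellin_cpow_Ioi (-1) (s := s) (by simp; linarith)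
  have hone := hasMellin_one_Ioi hs
  have hconst := hasMellin_const_smul hone.1 (1 / 2 - a : ℂ)
  simp_rw [ofReal_indicator_hurwitzPolarPart]
  convert! hasMellin_add hinv.1 hconst.1 using 1
  rw [hinv.2, hconst.2, hone.2, smul_eq_mul]
  ring

lemma hasSum_hurwitzKernel (a : ℝ) {t : ℝ} (ht : 0 < t) :
    HasSum (fun n : ℕ => Real.exp (-(n + a) * t)) (hurwitzKernel a t) := by
  convert! (hasSum_geometric_of_lt_one (Real.exp_pos (-t)).le
    (Real.exp_lt_one_iff.2 (neg_lt_zero.2 ht))).mul_left (Real.exp (-a * t)) using 1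
  ext n
  rw [← Real.exp_nat_mul, ← Real.exp_add]
  ring_nf

lemma mellin_hurwitzKernel (ha : a ∈ Ioc 0 1) (hs : 1 < s.re) :
    mellin (fun t => (hurwitzKernel a t : ℂ)) s = Gamma s * hurwitzZeta a s := by
  have hzeta := hasSum_hurwitzZeta_of_one_lt_re (Ioc_subset_Icc_self ha) hs
  have hshift_pos (n : ℕ) : 0 < (n : ℝ) + a := add_pos_of_nonneg_of_pos n.cast_nonneg ha.1
  have hsummable : Summable fun n : ℕ => ‖(1 : ℂ)‖ / ((n : ℝ) + a) ^ s.re := by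
    refine hzeta.summable.norm.congr fun n => ?_
    rw [norm_div, ← norm_cpow_eq_rpow_re_of_pos (hshift_pos n)]
    push_cast; rfl
  have hmellin := hasSum_mellin (a := fun _ : ℕ => (1 : ℂ)) (p := fun n => (n : ℝ) + a)
    (F := fun t => (hurwitzKernel a t : ℂ)) (s := s) (fun n => .inr (hshift_pos n)) (by linarith)
    (fun t ht => by simpa using! hasSum_ofReal.2 (hasSum_hurwitzKernel a ht)) hsummable
  refine hmellin.unique ?_
  convert! hzeta.mul_left (Gamma s) using 2 with n
  push_cast
  ring

lemma Gamma_mul_hurwitzZeta_of_one_lt_re (ha : a ∈ Ioc 0 1) (hs : 1 < s.re) :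
    Gamma s * hurwitzZeta a s =
      mellin (fun t => (truncatedKernel a t : ℂ)) s + (1 / (s - 1) + (1 / 2 - a) / s) := by
  have hpolar := hasMellin_hurwitzPolarPart_Ioc a hs
  rw [← mellin_hurwitzKernel ha hs, ← hpolar.2,
    ← (hasMellin_add (mellinConvergent_truncatedKernel ha (by linarith)) hpolar.1).2]
  simp_rw [hurwitzKernel_eq_truncatedKernel_add, ofReal_add]

lemma Gamma_add_one_mul_hurwitzZeta (ha : a ∈ Ioc 0 1) (hs : -1 < s.re) (hs_one : s ≠ 1) :
    Gamma (s + 1) * hurwitzZeta a s =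
      s * mellin (fun t => (truncatedKernel a t : ℂ)) s + (s / (s - 1) + (1 / 2 - a)) := by
  let U : Set ℂ := {s | -1 < s.re} \ {1}
  have hU_open : IsOpen U := (isOpen_lt continuous_const continuous_re).sdiff isClosed_singleton
  have hU_conn : IsPreconnected U :=
    isPreconnected_re_gt_diff_of_countable _ (countable_singleton 1)
  have hleft : DifferentiableOn ℂ (fun s => Gamma (s + 1) * hurwitzZeta a s) U := by
    refine fun s hs => DifferentiableAt.differentiableWithinAt ?_
    refine DifferentiableAt.mul ?_ (differentiableAt_hurwitzZeta _ hs.2)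
    refine (differentiableAt_Gamma _ fun m hm => ?_).comp s (by fun_prop)
    have hre : s.re + 1 = -m := by simpa using congrArg re hm
    linarith [show -1 < s.re from hs.1, (m.cast_nonneg : (0 : ℝ) ≤ m)]
  have hright : DifferentiableOn ℂ (fun s =>
      s * mellin (fun t => (truncatedKernel a t : ℂ)) s + (s / (s - 1) + (1 / 2 - a))) U := by
    refine fun s hs => DifferentiableAt.differentiableWithinAt ?_
    have := differentiableAt_mellin_truncatedKernel ha hs.1
    have : s - 1 ≠ 0 := sub_ne_zero.2 hs.2
    fun_prop (disch := assumption)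
  refine (hleft.analyticOnNhd hU_open).eqOn_of_preconnected_of_eventuallyEq
    (hright.analyticOnNhd hU_open) hU_conn (z₀ := 2) (by norm_num [U]) ?_ ⟨hs, hs_one⟩
  filter_upwards [(isOpen_lt continuous_const continuous_re).mem_nhds
    (by simp : (1 : ℝ) < (2 : ℂ).re)] with z hz
  have hz_zero : z ≠ 0 := by rintro rfl; norm_num at hz
  have hz_one : z - 1 ≠ 0 := by
    rw [sub_ne_zero]; rintro rfl; simp at hz
  rw [Gamma_add_one _ hz_zero, mul_assoc, Gamma_mul_hurwitzZeta_of_one_lt_re ha hz]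
  field_simp

lemma Gamma_mul_hurwitzZeta (ha : a ∈ Ioc 0 1) (hs : -1 < s.re) (hs_zero : s ≠ 0)
    (hs_one : s ≠ 1) :
    Gamma s * hurwitzZeta a s =
      mellin (fun t => (truncatedKernel a t : ℂ)) s + (1 / (s - 1) + (1 / 2 - a) / s) := by
  refine mul_left_cancel₀ hs_zero ?_
  rw [← mul_assoc, ← Gamma_add_one _ hs_zero, Gamma_add_one_mul_hurwitzZeta ha hs hs_one]
  field_simp

lemma hasMellin_regularizedKernel (ha : a ∈ Ioc 0 1) (hs : s.re ∈ Ioo (-1) 0) :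
    HasMellin (fun t => (regularizedKernel a t : ℂ)) s (Gamma s * hurwitzZeta a s) := by
  have hs_zero : s ≠ 0 := by rintro rfl; simp at hs
  have hs_one : s ≠ 1 := by rintro rfl; norm_num at hs
  have hpolar := hasMellin_hurwitzPolarPart_Ioi a hs.2
  have hdiff := hasMellin_sub (mellinConvergent_truncatedKernel ha hs.1) hpolar.1
  have hcongr : EqOn
      (fun t : ℝ => (t : ℂ) ^ (s - 1) •
        ((truncatedKernel a t : ℂ) - ((Ioi 1).indicator (hurwitzPolarPart a) t : ℝ)))
      (fun t : ℝ => (t : ℂ) ^ (s - 1) • (regularizedKernel a t : ℂ)) (Ioi 0) := fun t ht => by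
    simp only [regularizedKernel_eq_truncatedKernel_sub a ht, ofReal_sub]
  refine ⟨hdiff.1.congr_fun hcongr measurableSet_Ioi, ?_⟩
  rw [mellin, ← setIntegral_congr_fun measurableSet_Ioi hcongr,
    Gamma_mul_hurwitzZeta ha hs.1 hs_zero hs_one]
  refine hdiff.2.trans ?_
  rw [hpolar.2, sub_neg_eq_add]

lemma hurwitzZeta_zero (ha : a ∈ Ioc 0 1) : hurwitzZeta a 0 = (1 / 2 - a : ℝ) := by
  simpa using Gamma_add_one_mul_hurwitzZeta ha (s := 0) (by simp) zero_ne_one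

lemma hurwitzZeta_neg_one (ha : a ∈ Icc 0 1) :
    hurwitzZeta a (-1) = (-(a ^ 2 - a + 1 / 6) / 2 : ℝ) := by
  have hneg := hurwitzZeta_neg_nat (k := 1) one_ne_zero ha
  rw [one_add_one_eq_two, eval_bernoulli_two] at hneg
  push_cast at hneg ⊢
  rw [hneg]
  ring

end

section

variable {a σ : ℝ}

lemma integrableOn_regularizedKernel (ha : a ∈ Ioc 0 1) (hσ : σ ∈ Ioo (-1) 0) :
    IntegrableOn (fun t => t ^ (σ - 1) * regularizedKernel a t) (Ioi 0) :=
  integrableOn_of_mellinConvergent_ofReal (hasMellin_regularizedKernel ha (s := σ) hσ).1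

lemma hurwitzZeta_ofReal_eq_integral (ha : a ∈ Ioc 0 1) (hσ : σ ∈ Ioo (-1) 0) :
    hurwitzZeta a σ =
      ((Real.Gamma σ)⁻¹ * ∫ t in Ioi 0, t ^ (σ - 1) * regularizedKernel a t : ℝ) := by
  have hmellin := (hasMellin_regularizedKernel ha (s := σ) hσ).2
  rw [mellin_ofReal, Gamma_ofReal] at hmellin
  rw [ofReal_mul, hmellin, ofReal_inv, inv_mul_cancel_left₀]
  exact ofReal_ne_zero.2 (real_Gamma_ne_zero_of_mem_Ioo hσ)

lemma hurwitzZeta_ofReal_im (ha : a ∈ Ioc 0 1) (hσ : σ ∈ Ioo (-1) 0) :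
    (hurwitzZeta a σ).im = 0 := by
  rw [hurwitzZeta_ofReal_eq_integral ha hσ, ofReal_im]

lemma hurwitzZeta_ne_zero_of_integral_ne_zero (ha : a ∈ Ioc 0 1) (hσ : σ ∈ Ioo (-1) 0)
    (hint : ∫ t in Ioi 0, t ^ (σ - 1) * regularizedKernel a t ≠ 0) : hurwitzZeta a σ ≠ 0 := by
  rw [hurwitzZeta_ofReal_eq_integral ha hσ]
  exact ofReal_ne_zero.2 (mul_ne_zero (inv_ne_zero (real_Gamma_ne_zero_of_mem_Ioo hσ)) hint)

lemma hurwitzZeta_ne_zero_of_one_half_lt (ha : a ∈ Ioc (1 / 2) 1) (hB : 0 ≤ a ^ 2 - a + 1 / 6)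
    (hσ : σ ∈ Ioo (-1) 0) : hurwitzZeta a σ ≠ 0 := by
  have ha' : a ∈ Ioc 0 1 := ⟨one_half_pos.trans ha.1, ha.2⟩
  have hpos : 0 < ∫ t in Ioi 0, t ^ (σ - 1) * regularizedKernel a t :=
    setIntegral_pos_of_forall_pos measurableSet_Ioi (by simp)
      (integrableOn_regularizedKernel ha' hσ) fun t ht =>
        mul_pos (Real.rpow_pos_of_pos ht _) (regularizedKernel_pos ha hB ht)
  exact hurwitzZeta_ne_zero_of_integral_ne_zero ha' hσ hpos.ne'

lemma hurwitzZeta_ne_zero_of_le_one_half (ha : a ∈ Ioc 0 (1 / 2)) (hB : a ^ 2 - a + 1 / 6 ≤ 0)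
    (hσ : σ ∈ Ioo (-1) 0) : hurwitzZeta a σ ≠ 0 := by
  have ha' : a ∈ Ioc 0 1 := ⟨ha.1, ha.2.trans (by norm_num)⟩
  have hpos : 0 < ∫ t in Ioi 0, -(t ^ (σ - 1) * regularizedKernel a t) :=
    setIntegral_pos_of_forall_pos measurableSet_Ioi (by simp)
      (integrableOn_regularizedKernel ha' hσ).neg fun t ht =>
        neg_pos.2 <| mul_neg_of_pos_of_neg (Real.rpow_pos_of_pos ht _)
          (regularizedKernel_neg ha.2 hB ht)
  rw [integral_neg, neg_pos] at hpos
  exact hurwitzZeta_ne_zero_of_integral_ne_zero ha' hσ hpos.ne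

lemma continuousOn_hurwitzZeta_re (a : UnitAddCircle) :
    ContinuousOn (fun σ : ℝ => (hurwitzZeta a σ).re) {1}ᶜ := fun σ hσ => by
  have hzeta := (differentiableAt_hurwitzZeta a (ofReal_ne_one.2 hσ)).continuousAt
  exact (continuous_re.continuousAt.comp
    (hzeta.comp continuous_ofReal.continuousAt)).continuousWithinAt

lemma exists_hurwitzZeta_eq_zero (ha : a ∈ Ioc 0 1)
    (h : 0 < (1 / 2 - a) * (a ^ 2 - a + 1 / 6)) : ∃ σ ∈ Ioo (-1 : ℝ) 0, hurwitzZeta a σ = 0 := by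
  have hcont : ContinuousOn (fun σ : ℝ => (hurwitzZeta a σ).re) (Icc (-1) 0) :=
    (continuousOn_hurwitzZeta_re a).mono fun σ hσ => (hσ.2.trans_lt one_pos).ne
  have hleft : (hurwitzZeta a (-1 : ℝ)).re = -(a ^ 2 - a + 1 / 6) / 2 := by
    rw [ofReal_neg, ofReal_one, hurwitzZeta_neg_one (Ioc_subset_Icc_self ha), ofReal_re]
  have hright : (hurwitzZeta a (0 : ℝ)).re = 1 / 2 - a := by
    rw [ofReal_zero, hurwitzZeta_zero ha, ofReal_re]
  have hre : ∃ σ ∈ Ioo (-1 : ℝ) 0, (hurwitzZeta a σ).re = 0 := by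
    rcases mul_pos_iff.1 h with ⟨hA, hB⟩ | ⟨hA, hB⟩
    · exact intermediate_value_Ioo (by norm_num) hcont ⟨by linarith, by linarith⟩
    · exact intermediate_value_Ioo' (by norm_num) hcont ⟨by linarith, by linarith⟩
  obtain ⟨σ, hσ, hσ_re⟩ := hre
  exact ⟨σ, hσ, Complex.ext hσ_re (hurwitzZeta_ofReal_im ha hσ)⟩

lemma exists_hurwitzZeta_eq_zero_iff (ha : a ∈ Ioc 0 1) :
    (∃ σ ∈ Ioo (-1 : ℝ) 0, hurwitzZeta a σ = 0) ↔
      0 < (1 / 2 - a) * (a ^ 2 - a + 1 / 6) := by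
  refine ⟨?_, exists_hurwitzZeta_eq_zero ha⟩
  rintro ⟨σ, hσ, hzero⟩
  rcases le_or_gt a (1 / 2) with ha_half | ha_half
  · have hB : 0 < a ^ 2 - a + 1 / 6 := not_le.1 fun hB =>
      hurwitzZeta_ne_zero_of_le_one_half ⟨ha.1, ha_half⟩ hB hσ hzero
    exact mul_pos (by nlinarith) hB
  · have hB : a ^ 2 - a + 1 / 6 < 0 := not_le.1 fun hB =>
      hurwitzZeta_ne_zero_of_one_half_lt ⟨ha_half, ha.2⟩ hB hσ hzero
    exact mul_pos_of_neg_of_neg (sub_neg.2 ha_half) hB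

end

end

/-- With `b₂⁻ = (3 - √3)/6` and `b₂⁺ = (3 + √3)/6`, the Hurwitz zeta function `σ ↦ ζ(σ, a)`
with `0 < a ≤ 1` has a real zero in `(-1, 0)` iff `0 < a < b₂⁻` or `1/2 < a < b₂⁺`. -/
theorem hurwitzZeta_has_real_zero_in_Ioo_neg_one_zero_iff (a : ℝ) (ha : 0 < a) (ha' : a ≤ 1) :
    (∃ σ : ℝ, σ ∈ Set.Ioo (-1 : ℝ) 0 ∧ hurwitzZeta (a : UnitAddCircle) (σ : ℂ) = 0) ↔
      (0 < a ∧ a < (3 - Real.sqrt 3) / 6) ∨ (1 / 2 < a ∧ a < (3 + Real.sqrt 3) / 6) := by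
  have hsqrt_pos : 0 < Real.sqrt 3 := by positivity
  have hsqrt_sq : Real.sqrt 3 ^ 2 = 3 := Real.sq_sqrt (by norm_num)
  have hfactor : a ^ 2 - a + 1 / 6 =
      (a - (3 - Real.sqrt 3) / 6) * (a - (3 + Real.sqrt 3) / 6) := by
    linear_combination (1 / 36) * hsqrt_sq
  rw [exists_hurwitzZeta_eq_zero_iff ⟨ha, ha'⟩, hfactor,
    mul_mul_sub_pos_iff (by linarith) (by linarith), and_iff_right ha]
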